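/- Let (η, α, U, A, φ, σ) be a solution of the Gowdy symmetric IIA system on (T₋,T₊) with 0 < T₋ < t_i < T₊ < ∞. Assume there is a constant λ̄ with |λ| ≤ λ̄ < 1/2 and that the timelike convergence condition φ̇² + e^{2λφ}σ̇² ≥ (1/2)αQ²e^{2(η+λφ−U)} holds at every point. Then α̇/α = ∂ₜ(ln α) is bounded on (T₋,t_i] × S¹; consequently ln α and α̇ are also bounded on (T₋,t_i] × S¹. -/

import Mathlib

/-!
Write `P = α Q² exp(2λφ + 2(η - U))`, so that `∂ₜ ln α = -t P`; the task is to bound `P` towards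
the past. The argument uses the energies `E = ∫ (𝓔 + P/4)/√α` and `Ẽ = ∫ 𝓔/√α`.

* The wave equations give a balance law for `𝓔/√α` (`dens_balance`). Adding `P/(4√α)` cancels
  all source terms containing `P` (`densP_balance`), so `t² E(t)` is nondecreasing and `E`, hence
  also `Ẽ`, is bounded towards the past (`energy_bound`).
* In `∂_θ ln P` the derivative of `α` drops out by the constraint for `η'`, and the rest is bounded
  by a multiple of `𝓔/√α + 1/√α`. As `α` is decreasing in `t`, `1/√α` is bounded towards the past,
  so the oscillation of `ln P(t, ·)` is bounded uniformly in `t`: `P(t, y) ≤ M P(t, x)`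
  (`exists_pot_harnack`).
* The timelike convergence condition and `4λ² < 1` make the source of the balance law for `Ẽ` at
  most `-k₀ t P 𝓔/√α` for some `k₀ > 0` (`srcE_le`). With the previous point this yields
  `∂ₜ ln Ẽ ≤ -k t P(t, θ) = k ∂ₜ ln α(t, θ)` for every `θ`; since `Ẽ` is bounded and positive,
  `ln α` is bounded above (`log_α_le_log_energy`). The bound below is monotonicity in `t`.
* Finally `∫ P/(4√α) ≤ E` with `α` bounded above and `P(t, ·)` comparable to a constant bounds `P`
  pointwise (`exists_bounds`).
-/

noncomputable section

open Real Set MeasureTheory Filter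

/-- Partial derivative in the first (time) variable. -/
def pt (f : ℝ → ℝ → ℝ) : ℝ → ℝ → ℝ := fun t θ => deriv (fun s => f s θ) t

/-- Partial derivative in the second (angle) variable. -/
def pth (f : ℝ → ℝ → ℝ) : ℝ → ℝ → ℝ := fun t θ => deriv (fun x => f t x) θ

/-- The full Gowdy symmetric IIA system (both constraints, the equation for `α`,
and the four evolution equations) holding at all times in `S` (dot = `pt`,
prime = `pth`). -/
structure IsGowdyIIA (Q lam : ℝ) (S : Set ℝ) (η α U A φ σ : ℝ → ℝ → ℝ) : Prop where
  alpha_pos : ∀ t ∈ S, ∀ θ : ℝ, 0 < α t θ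
  constraint_t : ∀ t ∈ S, ∀ θ : ℝ,
    pt η t θ / t =
      (pt U t θ) ^ 2 + α t θ * (pth U t θ) ^ 2
      + exp (4 * U t θ) / (4 * t ^ 2) * ((pt A t θ) ^ 2 + α t θ * (pth A t θ) ^ 2)
      + (1 / 4) * ((pt φ t θ) ^ 2 + α t θ * (pth φ t θ) ^ 2
          + exp (2 * lam * φ t θ) * ((pt σ t θ) ^ 2 + α t θ * (pth σ t θ) ^ 2)
          + α t θ * Q ^ 2 * exp (2 * lam * φ t θ + 2 * (η t θ - U t θ)))
  constraint_θ : ∀ t ∈ S, ∀ θ : ℝ,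
    pth η t θ / t =
      2 * pt U t θ * pth U t θ
      + exp (4 * U t θ) / (2 * t ^ 2) * (pt A t θ * pth A t θ)
      - pth α t θ / (2 * t * α t θ)
      + (1 / 2) * (pt φ t θ * pth φ t θ
          + exp (2 * lam * φ t θ) * (pt σ t θ * pth σ t θ))
  constraint_α : ∀ t ∈ S, ∀ θ : ℝ,
    pt α t θ = - t * (α t θ) ^ 2 * Q ^ 2 * exp (2 * lam * φ t θ + 2 * (η t θ - U t θ))
  evol_U : ∀ t ∈ S, ∀ θ : ℝ,
    pt (pt U) t θ - α t θ * pth (pth U) t θ =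
      - pt U t θ / t + pt α t θ * pt U t θ / (2 * α t θ) + pth α t θ * pth U t θ / 2
      + exp (4 * U t θ) / (2 * t ^ 2) * ((pt A t θ) ^ 2 - α t θ * (pth A t θ) ^ 2)
      + (1 / 4) * α t θ * Q ^ 2 * exp (2 * lam * φ t θ + 2 * (η t θ - U t θ))
  evol_A : ∀ t ∈ S, ∀ θ : ℝ,
    pt (pt A) t θ - α t θ * pth (pth A) t θ =
      pt A t θ / t + pt α t θ * pt A t θ / (2 * α t θ) + pth α t θ * pth A t θ / 2
      - 4 * (pt A t θ * pt U t θ - α t θ * pth A t θ * pth U t θ)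
  evol_φ : ∀ t ∈ S, ∀ θ : ℝ,
    pt (pt φ) t θ - α t θ * pth (pth φ) t θ =
      - pt φ t θ / t + pt α t θ * pt φ t θ / (2 * α t θ) + pth α t θ * pth φ t θ / 2
      + lam * exp (2 * lam * φ t θ) * ((pt σ t θ) ^ 2 - α t θ * (pth σ t θ) ^ 2)
      - lam * α t θ * Q ^ 2 * exp (2 * lam * φ t θ + 2 * (η t θ - U t θ))
  evol_σ : ∀ t ∈ S, ∀ θ : ℝ,
    pt (pt σ) t θ - α t θ * pth (pth σ) t θ =
      - pt σ t θ / t + pt α t θ * pt σ t θ / (2 * α t θ) + pth α t θ * pth σ t θ / 2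
      - 2 * lam * (pt φ t θ * pt σ t θ - α t θ * pth φ t θ * pth σ t θ)

/-- A smooth, spatially `2π`-periodic solution of the Gowdy symmetric IIA system
on the areal time interval `(Tm, Tp)`. -/
structure GowdySolution (Q lam Tm Tp : ℝ) where
  η : ℝ → ℝ → ℝ
  α : ℝ → ℝ → ℝ
  U : ℝ → ℝ → ℝ
  A : ℝ → ℝ → ℝ
  φ : ℝ → ℝ → ℝ
  σ : ℝ → ℝ → ℝ
  smooth : ∀ f ∈ ([η, α, U, A, φ, σ] : List (ℝ → ℝ → ℝ)),
    ContDiffOn ℝ (⊤ : ℕ∞) (fun p : ℝ × ℝ => f p.1 p.2) (Ioo Tm Tp ×ˢ (univ : Set ℝ))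
  periodic : ∀ f ∈ ([η, α, U, A, φ, σ] : List (ℝ → ℝ → ℝ)), ∀ t θ : ℝ,
    f t (θ + 2 * π) = f t θ
  sys : IsGowdyIIA Q lam (Ioo Tm Tp) η α U A φ σ

/-- The energy density `𝓔`. -/
def calE (lam : ℝ) (α U A φ σ : ℝ → ℝ → ℝ) (t θ : ℝ) : ℝ :=
  (pt U t θ) ^ 2 + α t θ * (pth U t θ) ^ 2
  + exp (4 * U t θ) / (4 * t ^ 2) * ((pt A t θ) ^ 2 + α t θ * (pth A t θ) ^ 2)
  + (1 / 4) * ((pt φ t θ) ^ 2 + α t θ * (pth φ t θ) ^ 2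
      + exp (2 * lam * φ t θ) * ((pt σ t θ) ^ 2 + α t θ * (pth σ t θ) ^ 2))

/-- The energy `E(t)` (integral over the circle `S¹ = [0, 2π]`). -/
def energyE (Q lam : ℝ) (η α U A φ σ : ℝ → ℝ → ℝ) (t : ℝ) : ℝ :=
  ∫ θ in Ioc (0 : ℝ) (2 * π),
    (1 / Real.sqrt (α t θ)) *
      (calE lam α U A φ σ t θ
        + (1 / 4) * α t θ * Q ^ 2 * exp (2 * (η t θ + lam * φ t θ - U t θ)))

/-- The energy `Ẽ(t)`. -/
def energyEt (lam : ℝ) (α U A φ σ : ℝ → ℝ → ℝ) (t : ℝ) : ℝ :=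
  ∫ θ in Ioc (0 : ℝ) (2 * π), calE lam α U A φ σ t θ / Real.sqrt (α t θ)

/-- The timelike convergence condition (TCC) for the Gowdy symmetric IIA system. -/
def TCC (Q lam Tm Tp : ℝ) (η α U φ σ : ℝ → ℝ → ℝ) : Prop :=
  ∀ t ∈ Ioo Tm Tp, ∀ θ : ℝ,
    (pt φ t θ) ^ 2 + exp (2 * lam * φ t θ) * (pt σ t θ) ^ 2
      ≥ (1 / 2) * α t θ * Q ^ 2 * exp (2 * (η t θ + lam * φ t θ - U t θ))

/-! ### Smooth functions on the strip -/

/-- `f` is smooth on the strip `(Tm, Tp) × ℝ`, as a function of both variables. -/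
def Sm (Tm Tp : ℝ) (f : ℝ → ℝ → ℝ) : Prop :=
  ContDiffOn ℝ (⊤ : ℕ∞) (fun p : ℝ × ℝ => f p.1 p.2) (Ioo Tm Tp ×ˢ (univ : Set ℝ))

section Strip

variable {Tm Tp : ℝ} {f : ℝ → ℝ → ℝ}

lemma strip_isOpen (Tm Tp : ℝ) : IsOpen (Ioo Tm Tp ×ˢ (univ : Set ℝ)) :=
  isOpen_Ioo.prod isOpen_univ

lemma Sm.contDiffAt (hf : Sm Tm Tp f) {t : ℝ} (ht : t ∈ Ioo Tm Tp) (θ : ℝ) :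
    ContDiffAt ℝ (⊤ : ℕ∞) (fun p : ℝ × ℝ => f p.1 p.2) (t, θ) :=
  ContDiffOn.contDiffAt hf ((strip_isOpen Tm Tp).mem_nhds ⟨ht, mem_univ _⟩)

lemma Sm.hasFDerivAt (hf : Sm Tm Tp f) {t : ℝ} (ht : t ∈ Ioo Tm Tp) (θ : ℝ) :
    HasFDerivAt (fun p : ℝ × ℝ => f p.1 p.2)
      (fderiv ℝ (fun p : ℝ × ℝ => f p.1 p.2) (t, θ)) (t, θ) :=
  ((hf.contDiffAt ht θ).differentiableAt (by simp)).hasFDerivAt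

lemma Sm.hasDerivAt_t' (hf : Sm Tm Tp f) {t : ℝ} (ht : t ∈ Ioo Tm Tp) (θ : ℝ) :
    HasDerivAt (fun s => f s θ) (fderiv ℝ (fun p : ℝ × ℝ => f p.1 p.2) (t, θ) (1, 0)) t :=
  HasFDerivAt.comp_hasDerivAt (f := fun s => (s, θ)) t (hf.hasFDerivAt ht θ)
    ((hasDerivAt_id' t).prodMk (hasDerivAt_const t θ))

lemma Sm.hasDerivAt_x' (hf : Sm Tm Tp f) {t : ℝ} (ht : t ∈ Ioo Tm Tp) (θ : ℝ) :
    HasDerivAt (fun x => f t x) (fderiv ℝ (fun p : ℝ × ℝ => f p.1 p.2) (t, θ) (0, 1)) θ :=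
  HasFDerivAt.comp_hasDerivAt (f := fun x => (t, x)) θ (hf.hasFDerivAt ht θ)
    ((hasDerivAt_const θ t).prodMk (hasDerivAt_id' θ))

lemma Sm.pt_eq (hf : Sm Tm Tp f) {t : ℝ} (ht : t ∈ Ioo Tm Tp) (θ : ℝ) :
    pt f t θ = fderiv ℝ (fun p : ℝ × ℝ => f p.1 p.2) (t, θ) (1, 0) :=
  (hf.hasDerivAt_t' ht θ).deriv

lemma Sm.pth_eq (hf : Sm Tm Tp f) {t : ℝ} (ht : t ∈ Ioo Tm Tp) (θ : ℝ) :
    pth f t θ = fderiv ℝ (fun p : ℝ × ℝ => f p.1 p.2) (t, θ) (0, 1) :=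
  (hf.hasDerivAt_x' ht θ).deriv

lemma Sm.hasDerivAt_t (hf : Sm Tm Tp f) {t : ℝ} (ht : t ∈ Ioo Tm Tp) (θ : ℝ) :
    HasDerivAt (fun s => f s θ) (pt f t θ) t :=
  (hf.hasDerivAt_t' ht θ).differentiableAt.hasDerivAt

lemma Sm.hasDerivAt_x (hf : Sm Tm Tp f) {t : ℝ} (ht : t ∈ Ioo Tm Tp) (θ : ℝ) :
    HasDerivAt (fun x => f t x) (pth f t θ) θ :=
  (hf.hasDerivAt_x' ht θ).differentiableAt.hasDerivAt

lemma Sm.fderiv_apply (hf : Sm Tm Tp f) (v : ℝ × ℝ) :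
    ContDiffOn ℝ (⊤ : ℕ∞) (fun q => fderiv ℝ (fun p : ℝ × ℝ => f p.1 p.2) q v)
      (Ioo Tm Tp ×ˢ (univ : Set ℝ)) :=
  (ContDiffOn.fderiv_of_isOpen hf (strip_isOpen Tm Tp) (by simp)).clm_apply contDiffOn_const

lemma Sm.pt (hf : Sm Tm Tp f) : Sm Tm Tp (pt f) :=
  (hf.fderiv_apply (1, 0)).congr fun q hq => hf.pt_eq hq.1 q.2

lemma Sm.pth (hf : Sm Tm Tp f) : Sm Tm Tp (pth f) :=
  (hf.fderiv_apply (0, 1)).congr fun q hq => hf.pth_eq hq.1 q.2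

/-- Mixed partial derivatives commute. -/
lemma Sm.pt_pth (hf : Sm Tm Tp f) {t : ℝ} (ht : t ∈ Ioo Tm Tp) (θ : ℝ) :
    _root_.pt (_root_.pth f) t θ = _root_.pth (_root_.pt f) t θ := by
  have hsym : IsSymmSndFDerivAt ℝ (fun p : ℝ × ℝ => f p.1 p.2) (t, θ) :=
    (hf.contDiffAt ht θ).isSymmSndFDerivAt (by simp; norm_cast)
  have hd : DifferentiableAt ℝ (fderiv ℝ (fun p : ℝ × ℝ => f p.1 p.2)) (t, θ) :=
    ((hf.contDiffAt ht θ).fderiv_right (m := 1) (by norm_cast)).differentiableAt (by simp)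
  have key : ∀ v w : ℝ × ℝ,
      fderiv ℝ (fun q => fderiv ℝ (fun p : ℝ × ℝ => f p.1 p.2) q v) (t, θ) w
        = fderiv ℝ (fderiv ℝ (fun p : ℝ × ℝ => f p.1 p.2)) (t, θ) w v := by
    intro v w
    rw [fderiv_clm_apply hd (differentiableAt_const v)]
    simp
  have hnhds := (strip_isOpen Tm Tp).mem_nhds (show (t, θ) ∈ _ from ⟨ht, mem_univ θ⟩)
  rw [hf.pth.pt_eq ht, hf.pt.pth_eq ht]
  have e1 : (fun p : ℝ × ℝ => _root_.pth f p.1 p.2) =ᶠ[nhds (t, θ)]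
      fun q => fderiv ℝ (fun p : ℝ × ℝ => f p.1 p.2) q (0, 1) := by
    filter_upwards [hnhds] with q hq using hf.pth_eq hq.1 q.2
  have e2 : (fun p : ℝ × ℝ => _root_.pt f p.1 p.2) =ᶠ[nhds (t, θ)]
      fun q => fderiv ℝ (fun p : ℝ × ℝ => f p.1 p.2) q (1, 0) := by
    filter_upwards [hnhds] with q hq using hf.pt_eq hq.1 q.2
  rw [e1.fderiv_eq, e2.fderiv_eq, key, key]
  exact hsym _ _

lemma Sm.continuous_x (hf : Sm Tm Tp f) {t : ℝ} (ht : t ∈ Ioo Tm Tp) :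
    Continuous (fun x => f t x) :=
  continuous_iff_continuousAt.2 fun x => (hf.hasDerivAt_x ht x).continuousAt

lemma Sm.intervalIntegrable (hf : Sm Tm Tp f) {t : ℝ} (ht : t ∈ Ioo Tm Tp) (a b : ℝ) :
    IntervalIntegrable (fun x => f t x) volume a b :=
  (hf.continuous_x ht).intervalIntegrable a b

/-- Differentiation under the integral sign. -/
lemma Sm.hasDerivAt_integral (hf : Sm Tm Tp f) {t : ℝ} (ht : t ∈ Ioo Tm Tp) (a b : ℝ) :
    HasDerivAt (fun s => ∫ x in a..b, f s x) (∫ x in a..b, _root_.pt f t x) t := by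
  obtain ⟨c, hc, hct⟩ := exists_between ht.1
  obtain ⟨d, htd, hd⟩ := exists_between ht.2
  have hsub : Icc c d ⊆ Ioo Tm Tp := fun s hs => ⟨hc.trans_le hs.1, hs.2.trans_lt hd⟩
  have hcont : ContinuousOn (fun p : ℝ × ℝ => _root_.pt f p.1 p.2) (Icc c d ×ˢ uIcc a b) :=
    (ContDiffOn.continuousOn hf.pt).mono (prod_mono hsub (subset_univ _))
  obtain ⟨C, hC⟩ := (isCompact_Icc.prod isCompact_uIcc).exists_bound_of_continuousOn hcont
  refine (intervalIntegral.hasDerivAt_integral_of_dominated_loc_of_deriv_le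
    (s := Icc c d) (bound := fun _ => C) (Icc_mem_nhds hct htd) ?_ (hf.intervalIntegrable ht a b)
    (hf.pt.continuous_x ht).aestronglyMeasurable ?_ intervalIntegrable_const ?_).2
  · filter_upwards [Ioo_mem_nhds ht.1 ht.2] with s hs
    exact (hf.continuous_x hs).aestronglyMeasurable
  · exact Eventually.of_forall fun x hx s hs => hC (s, x) ⟨hs, uIoc_subset_uIcc hx⟩
  · exact Eventually.of_forall fun x _ s hs => hf.hasDerivAt_t (hsub hs) x

/-- A density obeying a balance law `∂ₜ f = ∂_θ g + h` with `2π`-periodic flux `g` has the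
source `h` as the only contribution to the derivative of its integral. -/
lemma Sm.hasDerivAt_balance {g h : ℝ → ℝ → ℝ} (hf : Sm Tm Tp f) (hg : Sm Tm Tp g)
    (hgp : ∀ t θ : ℝ, g t (θ + 2 * π) = g t θ)
    (hbal : ∀ t ∈ Ioo Tm Tp, ∀ θ, _root_.pt f t θ = _root_.pth g t θ + h t θ)
    {t : ℝ} (ht : t ∈ Ioo Tm Tp) :
    HasDerivAt (fun s => ∫ x in (0 : ℝ)..2 * π, f s x) (∫ x in (0 : ℝ)..2 * π, h t x) t := by
  have h1 := hf.hasDerivAt_integral ht 0 (2 * π)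
  have h2 : ∫ x in (0 : ℝ)..2 * π, _root_.pth g t x = 0 := by
    rw [intervalIntegral.integral_eq_sub_of_hasDerivAt (fun x _ => hg.hasDerivAt_x ht x)
      (hg.pth.intervalIntegrable ht _ _)]
    have := hgp t 0
    rw [zero_add] at this
    rw [this, sub_self]
  have h3 : ∫ x in (0 : ℝ)..2 * π, h t x = ∫ x in (0 : ℝ)..2 * π, _root_.pt f t x := by
    have e : (fun x => h t x) = fun x => _root_.pt f t x - _root_.pth g t x := by
      funext x; rw [hbal t ht x]; ring
    rw [e, intervalIntegral.integral_sub (hf.pt.intervalIntegrable ht _ _)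
      (hg.pth.intervalIntegrable ht _ _), h2, sub_zero]
  rw [h3]; exact h1

lemma pt_periodic (hf : ∀ t θ : ℝ, f t (θ + 2 * π) = f t θ) (t θ : ℝ) :
    pt f t (θ + 2 * π) = pt f t θ := by
  simp only [pt, hf]

lemma pth_periodic (hf : ∀ t θ : ℝ, f t (θ + 2 * π) = f t θ) (t θ : ℝ) :
    pth f t (θ + 2 * π) = pth f t θ := by
  unfold pth
  rw [← deriv_comp_add_const]
  simp only [hf]

end Strip

/-! ### The energy densities and their balance laws -/

namespace GowdySolution

variable {Q lam Tm Tp : ℝ} (G : GowdySolution Q lam Tm Tp)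

/-- The potential term `P = α Q² exp(2λφ + 2(η - U))`, so that `α̇ / α = -t P`. -/
def pot (t θ : ℝ) : ℝ :=
  G.α t θ * Q ^ 2 * exp (2 * lam * G.φ t θ + 2 * (G.η t θ - G.U t θ))

/-- The integrand `𝓔 / √α` of the energy `Ẽ`. -/
def dens (t θ : ℝ) : ℝ := calE lam G.α G.U G.A G.φ G.σ t θ / √(G.α t θ)

/-- The integrand `(𝓔 + P / 4) / √α` of the energy `E`. -/
def densP (t θ : ℝ) : ℝ := G.dens t θ + G.pot t θ / (4 * √(G.α t θ))

/-- The energy flux through the circle, common to the balance laws of `dens` and `densP`. -/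
def flux (t θ : ℝ) : ℝ :=
  √(G.α t θ) * (2 * pt G.U t θ * pth G.U t θ
    + exp (4 * G.U t θ) / (2 * t ^ 2) * (pt G.A t θ * pth G.A t θ)
    + (1 / 2) * (pt G.φ t θ * pth G.φ t θ
      + exp (2 * lam * G.φ t θ) * (pt G.σ t θ * pth G.σ t θ)))

/-- The part of the energy density that is damped by the expansion. -/
def damp (t θ : ℝ) : ℝ :=
  (pt G.U t θ) ^ 2 + exp (4 * G.U t θ) / (4 * t ^ 2) * (G.α t θ * (pth G.A t θ) ^ 2)
    + (1 / 4) * ((pt G.φ t θ) ^ 2 + exp (2 * lam * G.φ t θ) * (pt G.σ t θ) ^ 2)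

/-- The source in the balance law of `dens`. -/
def srcE (t θ : ℝ) : ℝ :=
  -((2 / t) * G.damp t θ + t * G.pot t θ / 2 * calE lam G.α G.U G.A G.φ G.σ t θ
    - G.pot t θ / 2 * (pt G.U t θ - lam * pt G.φ t θ)) / √(G.α t θ)

/-- The source in the balance law of `densP`. -/
def srcP (t θ : ℝ) : ℝ := -((2 / t) * G.damp t θ) / √(G.α t θ)

lemma sm_η : Sm Tm Tp G.η := G.smooth _ (by simp)
lemma sm_α : Sm Tm Tp G.α := G.smooth _ (by simp)
lemma sm_U : Sm Tm Tp G.U := G.smooth _ (by simp)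
lemma sm_A : Sm Tm Tp G.A := G.smooth _ (by simp)
lemma sm_φ : Sm Tm Tp G.φ := G.smooth _ (by simp)
lemma sm_σ : Sm Tm Tp G.σ := G.smooth _ (by simp)

lemma sm_sqrt : Sm Tm Tp (fun t θ => √(G.α t θ)) :=
  ContDiffOn.sqrt G.sm_α fun p hp => (G.sys.alpha_pos p.1 hp.1 p.2).ne'

lemma sm_pot : Sm Tm Tp G.pot :=
  (ContDiffOn.mul G.sm_α contDiffOn_const).mul
    ((contDiffOn_const.mul G.sm_φ).add
      (contDiffOn_const.mul (ContDiffOn.sub G.sm_η G.sm_U))).exp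

lemma sm_calE (hTm : 0 < Tm) : Sm Tm Tp (calE lam G.α G.U G.A G.φ G.σ) := by
  have hα := G.sm_α
  have hU := G.sm_U
  have hφ := G.sm_φ
  have hUt := G.sm_U.pt
  have hUx := G.sm_U.pth
  have hAt := G.sm_A.pt
  have hAx := G.sm_A.pth
  have hft := G.sm_φ.pt
  have hfx := G.sm_φ.pth
  have hst := G.sm_σ.pt
  have hsx := G.sm_σ.pth
  have ht0 : ∀ p ∈ Ioo Tm Tp ×ˢ (univ : Set ℝ), 4 * p.1 ^ 2 ≠ 0 := fun p hp => by
    have : 0 < p.1 := hTm.trans hp.1.1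
    positivity
  unfold Sm calE at *
  fun_prop (disch := assumption)

lemma sm_dens (hTm : 0 < Tm) : Sm Tm Tp G.dens :=
  ContDiffOn.div (G.sm_calE hTm) G.sm_sqrt
    fun p hp => (Real.sqrt_pos.2 (G.sys.alpha_pos p.1 hp.1 p.2)).ne'

lemma sm_densP (hTm : 0 < Tm) : Sm Tm Tp G.densP :=
  ContDiffOn.add (G.sm_dens hTm) (ContDiffOn.div G.sm_pot (contDiffOn_const.mul G.sm_sqrt)
    fun p hp => by
      have := Real.sqrt_pos.2 (G.sys.alpha_pos p.1 hp.1 p.2)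
      positivity)

lemma sm_flux (hTm : 0 < Tm) : Sm Tm Tp G.flux := by
  have hb := G.sm_sqrt
  have hU := G.sm_U
  have hφ := G.sm_φ
  have hUt := G.sm_U.pt
  have hUx := G.sm_U.pth
  have hAt := G.sm_A.pt
  have hAx := G.sm_A.pth
  have hft := G.sm_φ.pt
  have hfx := G.sm_φ.pth
  have hst := G.sm_σ.pt
  have hsx := G.sm_σ.pth
  have ht0 : ∀ p ∈ Ioo Tm Tp ×ˢ (univ : Set ℝ), 2 * p.1 ^ 2 ≠ 0 := fun p hp => by
    have : 0 < p.1 := hTm.trans hp.1.1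
    positivity
  unfold Sm flux at *
  refine hb.mul ?_
  fun_prop (disch := assumption)

lemma flux_periodic (t θ : ℝ) : G.flux t (θ + 2 * π) = G.flux t θ := by
  have hα := G.periodic G.α (by simp)
  have hU := G.periodic G.U (by simp)
  have hA := G.periodic G.A (by simp)
  have hφ := G.periodic G.φ (by simp)
  have hσ := G.periodic G.σ (by simp)
  simp only [flux, hα, hU, hφ, pt_periodic hU, pth_periodic hU, pt_periodic hA, pth_periodic hA,
    pt_periodic hφ, pth_periodic hφ, pt_periodic hσ, pth_periodic hσ]

lemma pot_periodic (t θ : ℝ) : G.pot t (θ + 2 * π) = G.pot t θ := by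
  simp only [pot, G.periodic G.α (by simp), G.periodic G.U (by simp), G.periodic G.η (by simp),
    G.periodic G.φ (by simp)]

lemma pot_nonneg {t : ℝ} (ht : t ∈ Ioo Tm Tp) (θ : ℝ) : 0 ≤ G.pot t θ := by
  have := G.sys.alpha_pos t ht θ
  unfold pot; positivity

lemma pt_α {t : ℝ} (ht : t ∈ Ioo Tm Tp) (θ : ℝ) :
    pt G.α t θ = -(t * G.pot t θ * G.α t θ) := by
  rw [G.sys.constraint_α t ht θ, pot]; ring

/-- The balance law of `𝓔 / √α`, a consequence of the wave equations for `U`, `A`, `φ`, `σ`. -/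
lemma dens_balance (hTm : 0 < Tm) (t : ℝ) (ht : t ∈ Ioo Tm Tp) (θ : ℝ) :
    pt G.dens t θ = pth G.flux t θ + G.srcE t θ := by
  have ht0 : t ≠ 0 := (hTm.trans ht.1).ne'
  have hα := G.sys.alpha_pos t ht θ
  have hb := Real.sqrt_pos.2 hα
  have dens_t :=
    ((((G.sm_U.pt.hasDerivAt_t ht θ).pow 2).add
      ((G.sm_α.hasDerivAt_t ht θ).mul ((G.sm_U.pth.hasDerivAt_t ht θ).pow 2))).add
    (((((G.sm_U.hasDerivAt_t ht θ).const_mul 4).exp).div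
      (((hasDerivAt_id' t).pow 2).const_mul 4) (show (4 : ℝ) * t ^ 2 ≠ 0 by positivity)).mul
      (((G.sm_A.pt.hasDerivAt_t ht θ).pow 2).add
        ((G.sm_α.hasDerivAt_t ht θ).mul ((G.sm_A.pth.hasDerivAt_t ht θ).pow 2))))).add
    ((((((G.sm_φ.pt.hasDerivAt_t ht θ).pow 2).add
      ((G.sm_α.hasDerivAt_t ht θ).mul ((G.sm_φ.pth.hasDerivAt_t ht θ).pow 2))).add
      ((((G.sm_φ.hasDerivAt_t ht θ).const_mul (2 * lam)).exp).mul
      (((G.sm_σ.pt.hasDerivAt_t ht θ).pow 2).add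
        ((G.sm_α.hasDerivAt_t ht θ).mul
          ((G.sm_σ.pth.hasDerivAt_t ht θ).pow 2)))))).const_mul (1 / 4))
  have dens_t := dens_t.div ((G.sm_α.hasDerivAt_t ht θ).sqrt hα.ne') hb.ne'
  have flux_x :=
    ((G.sm_α.hasDerivAt_x ht θ).sqrt hα.ne').mul
    (((((G.sm_U.pt.hasDerivAt_x ht θ).const_mul 2).mul (G.sm_U.pth.hasDerivAt_x ht θ)).add
    (((((G.sm_U.hasDerivAt_x ht θ).const_mul 4).exp).div_const (2 * t ^ 2)).mul
      ((G.sm_A.pt.hasDerivAt_x ht θ).mul (G.sm_A.pth.hasDerivAt_x ht θ)))).add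
    ((((G.sm_φ.pt.hasDerivAt_x ht θ).mul (G.sm_φ.pth.hasDerivAt_x ht θ)).add
      ((((G.sm_φ.hasDerivAt_x ht θ).const_mul (2 * lam)).exp).mul
      ((G.sm_σ.pt.hasDerivAt_x ht θ).mul (G.sm_σ.pth.hasDerivAt_x ht θ)))).const_mul (1 / 2)))
  have e1 : pt G.dens t θ = _ := HasDerivAt.deriv dens_t
  have e2 : pth G.flux t θ = _ := HasDerivAt.deriv flux_x
  rw [e1, e2]
  have hUe := G.sys.evol_U t ht θ
  have hAe := G.sys.evol_A t ht θ
  have hφe := G.sys.evol_φ t ht θ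
  have hσe := G.sys.evol_σ t ht θ
  have hαe := G.sys.constraint_α t ht θ
  have hsq : G.α t θ = √(G.α t θ) ^ 2 := (Real.sq_sqrt hα.le).symm
  simp only [srcE, damp, calE, pot, G.sm_U.pt_pth ht, G.sm_A.pt_pth ht, G.sm_φ.pt_pth ht,
    G.sm_σ.pt_pth ht, Pi.add_apply, Pi.mul_apply, Pi.pow_apply, Pi.div_apply] at *
  rw [hαe] at hUe hAe hφe hσe ⊢
  generalize √(G.α t θ) = b at *
  rw [hsq] at hUe hAe hφe hσe ⊢
  generalize exp (4 * G.U t θ) = X at *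
  generalize exp (2 * lam * G.φ t θ + 2 * (G.η t θ - G.U t θ)) = Z at *
  generalize exp (2 * lam * G.φ t θ) = Y at *
  have hb0 : b ≠ 0 := hb.ne'
  have k1 := sub_eq_zero.2 hUe
  have k2 := sub_eq_zero.2 hAe
  have k3 := sub_eq_zero.2 hφe
  have k4 := sub_eq_zero.2 hσe
  linear_combination (norm := (field_simp; ring)) (2 * pt G.U t θ / b) * k1
    + (X / (2 * t ^ 2) * pt G.A t θ / b) * k2 + (pt G.φ t θ / (2 * b)) * k3
    + (Y * pt G.σ t θ / (2 * b)) * k4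

/-- Adding `P / (4√α)` to the density cancels every term of the source that contains `P`; this
uses the constraint for `η̇` and the equation for `α̇`. -/
lemma densP_balance (hTm : 0 < Tm) (t : ℝ) (ht : t ∈ Ioo Tm Tp) (θ : ℝ) :
    pt G.densP t θ = pth G.flux t θ + G.srcP t θ := by
  have ht0 : t ≠ 0 := (hTm.trans ht.1).ne'
  have hα := G.sys.alpha_pos t ht θ
  have hb := Real.sqrt_pos.2 hα
  have pot_t := ((((G.sm_α.hasDerivAt_t ht θ).mul_const (Q ^ 2)).mul
    ((((G.sm_φ.hasDerivAt_t ht θ).const_mul (2 * lam)).add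
      (((G.sm_η.hasDerivAt_t ht θ).sub (G.sm_U.hasDerivAt_t ht θ)).const_mul 2)).exp)).div
    (((G.sm_α.hasDerivAt_t ht θ).sqrt hα.ne').const_mul 4) (by positivity))
  have e1 : pt G.densP t θ = _ :=
    HasDerivAt.deriv (((G.sm_dens hTm).hasDerivAt_t ht θ).add pot_t)
  rw [e1, G.dens_balance hTm t ht θ]
  have hη := G.sys.constraint_t t ht θ
  have hαe := G.sys.constraint_α t ht θ
  have hsq : G.α t θ = √(G.α t θ) ^ 2 := (Real.sq_sqrt hα.le).symm
  rw [div_eq_iff ht0] at hη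
  simp only [srcE, srcP, damp, calE, pot, Pi.add_apply, Pi.mul_apply, Pi.sub_apply] at *
  rw [hη, hαe]
  generalize √(G.α t θ) = b at *
  rw [hsq]
  generalize exp (4 * G.U t θ) = X at *
  generalize exp (2 * lam * G.φ t θ + 2 * (G.η t θ - G.U t θ)) = Z at *
  generalize exp (2 * lam * G.φ t θ) = Y at *
  have hb0 : b ≠ 0 := hb.ne'
  field_simp
  ring

/-! ### Energy estimates -/

lemma damp_le_calE {t : ℝ} (ht : t ∈ Ioo Tm Tp) (θ : ℝ) :
    G.damp t θ ≤ calE lam G.α G.U G.A G.φ G.σ t θ := by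
  have hα := G.sys.alpha_pos t ht θ
  have h1 : 0 ≤ G.α t θ * (pth G.U t θ) ^ 2 := by positivity
  have h2 : 0 ≤ exp (4 * G.U t θ) / (4 * t ^ 2) * (pt G.A t θ) ^ 2 := by positivity
  have h3 : 0 ≤ G.α t θ * (pth G.φ t θ) ^ 2 := by positivity
  have h4 : 0 ≤ exp (2 * lam * G.φ t θ) * (G.α t θ * (pth G.σ t θ) ^ 2) := by positivity
  unfold damp calE
  linarith

lemma damp_nonneg {t : ℝ} (ht : t ∈ Ioo Tm Tp) (θ : ℝ) : 0 ≤ G.damp t θ := by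
  have hα := G.sys.alpha_pos t ht θ
  unfold damp; positivity

lemma dens_nonneg {t : ℝ} (ht : t ∈ Ioo Tm Tp) (θ : ℝ) : 0 ≤ G.dens t θ :=
  div_nonneg ((G.damp_nonneg ht θ).trans (G.damp_le_calE ht θ)) (Real.sqrt_nonneg _)

lemma dens_le_densP {t : ℝ} (ht : t ∈ Ioo Tm Tp) (θ : ℝ) : G.dens t θ ≤ G.densP t θ := by
  have := G.pot_nonneg ht θ
  have : 0 ≤ G.pot t θ / (4 * √(G.α t θ)) := by positivity
  unfold densP; linarith

/-- The energy `E` may grow towards the past by at most the factor `(t_i / t)²`. -/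
lemma energy_bound (hTm : 0 < Tm) {t t_i : ℝ} (ht : t ∈ Ioo Tm Tp) (hti : t_i ∈ Ioo Tm Tp)
    (hle : t ≤ t_i) :
    t ^ 2 * ∫ x in (0 : ℝ)..2 * π, G.densP t x ≤ t_i ^ 2 * ∫ x in (0 : ℝ)..2 * π, G.densP t_i x := by
  have hder : ∀ s ∈ Ioo Tm Tp, HasDerivAt (fun s => s ^ 2 * ∫ x in (0 : ℝ)..2 * π, G.densP s x)
      (2 * s * (∫ x in (0 : ℝ)..2 * π, G.densP s x)
        + s ^ 2 * ∫ x in (0 : ℝ)..2 * π, G.srcP s x) s := by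
    intro s hs
    have h := ((hasDerivAt_id' s).pow 2).mul ((G.sm_densP hTm).hasDerivAt_balance
      (G.sm_flux hTm) G.flux_periodic (G.densP_balance hTm) hs)
    refine HasDerivAt.congr_deriv h ?_
    simp
  have hmono : MonotoneOn (fun s => s ^ 2 * ∫ x in (0 : ℝ)..2 * π, G.densP s x) (Ioo Tm Tp) := by
    refine monotoneOn_of_deriv_nonneg (convex_Ioo _ _)
      (fun s hs => (hder s hs).continuousAt.continuousWithinAt)
      (fun s hs => (hder s (interior_subset hs)).differentiableAt.differentiableWithinAt) ?_
    intro s hs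
    have hs := interior_subset hs
    have hs0 : 0 < s := hTm.trans hs.1
    rw [(hder s hs).deriv]
    -- the balance law exhibits `srcP` as a continuous function of the angle
    have hcont : Continuous (fun x => G.srcP s x) := by
      have e : (fun x => G.srcP s x) = fun x => pt G.densP s x - pth G.flux s x := by
        funext x; rw [G.densP_balance hTm s hs x]; ring
      rw [e]
      exact ((G.sm_densP hTm).pt.continuous_x hs).sub ((G.sm_flux hTm).pth.continuous_x hs)
    rw [← intervalIntegral.integral_const_mul, ← intervalIntegral.integral_const_mul,
      ← intervalIntegral.integral_add
        ((((G.sm_densP hTm).continuous_x hs).const_mul _).intervalIntegrable _ _)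
        ((hcont.const_mul _).intervalIntegrable _ _)]
    refine intervalIntegral.integral_nonneg (by positivity) fun x _ => ?_
    have h1 := G.dens_le_densP hs x
    have hb := Real.sqrt_pos.2 (G.sys.alpha_pos s hs x)
    have h2 : s ^ 2 * G.srcP s x = -(2 * s * (G.damp s x / √(G.α s x))) := by
      unfold srcP; field_simp
    have h3 : G.damp s x / √(G.α s x) ≤ G.dens s x := by
      unfold dens; gcongr; exact G.damp_le_calE hs x
    rw [h2]
    nlinarith
  exact hmono ht hti hle

lemma srcE_continuous (hTm : 0 < Tm) {t : ℝ} (ht : t ∈ Ioo Tm Tp) :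
    Continuous (fun x => G.srcE t x) := by
  have e : (fun x => G.srcE t x) = fun x => pt G.dens t x - pth G.flux t x := by
    funext x; rw [G.dens_balance hTm t ht x]; ring
  rw [e]
  exact ((G.sm_dens hTm).pt.continuous_x ht).sub ((G.sm_flux hTm).pth.continuous_x ht)

lemma tcc_pot (htcc : TCC Q lam Tm Tp G.η G.α G.U G.φ G.σ) {t : ℝ} (ht : t ∈ Ioo Tm Tp) (θ : ℝ) :
    G.pot t θ / 2 ≤ (pt G.φ t θ) ^ 2 + exp (2 * lam * G.φ t θ) * (pt G.σ t θ) ^ 2 := by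
  have h := htcc t ht θ
  rw [show 2 * (G.η t θ + lam * G.φ t θ - G.U t θ)
    = 2 * lam * G.φ t θ + 2 * (G.η t θ - G.U t θ) by ring] at h
  unfold pot
  linarith

/-- Under the timelike convergence condition, the damping term `φ̇² + e^{2λφ} σ̇² ≥ P / 2` absorbs
what is missing to complete the squares in `U̇` and `φ̇`, and for `4λ² < 1` a fraction
`(1 - 4λ²) / 2` of the term `t P 𝓔 / 2` is left over. -/
lemma srcE_le (hTm : 0 < Tm) (htcc : TCC Q lam Tm Tp G.η G.α G.U G.φ G.σ)
    {t : ℝ} (ht : t ∈ Ioo Tm Tp) (θ : ℝ) :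
    G.srcE t θ ≤ -((1 - 4 * lam ^ 2) / 4 * t * G.pot t θ * G.dens t θ) := by
  have ht0 : 0 < t := hTm.trans ht.1
  have hα := G.sys.alpha_pos t ht θ
  have hb := Real.sqrt_pos.2 hα
  have hP := G.pot_nonneg ht θ
  have hK := G.tcc_pot htcc ht θ
  set P := G.pot t θ with hPdef
  set u := pt G.U t θ
  set f := pt G.φ t θ
  set E := calE lam G.α G.U G.A G.φ G.σ t θ with hE
  have hdamp : P / 8 ≤ G.damp t θ := by
    have h1 : 0 ≤ exp (4 * G.U t θ) / (4 * t ^ 2) * (G.α t θ * (pth G.A t θ) ^ 2) := by positivity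
    have h2 : 0 ≤ u ^ 2 := sq_nonneg _
    unfold damp; linarith
  have hEge : u ^ 2 + f ^ 2 / 4 ≤ E := by
    have h1 : 0 ≤ G.α t θ * (pth G.U t θ) ^ 2 := by positivity
    have h2 : 0 ≤ exp (4 * G.U t θ) / (4 * t ^ 2)
      * ((pt G.A t θ) ^ 2 + G.α t θ * (pth G.A t θ) ^ 2) := by positivity
    have h3 : 0 ≤ G.α t θ * (pth G.φ t θ) ^ 2 := by positivity
    have h4 : 0 ≤ exp (2 * lam * G.φ t θ)
      * ((pt G.σ t θ) ^ 2 + G.α t θ * (pth G.σ t θ) ^ 2) := by positivity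
    rw [hE]; unfold calE; linarith
  -- `r` is the fraction of `t P 𝓔 / 2` spent on completing the squares
  obtain ⟨r, hr⟩ : ∃ r, r = (1 + 4 * lam ^ 2) / 2 := ⟨_, rfl⟩
  have hr0 : 0 < r := by rw [hr]; positivity
  have hsq : r * t * (u ^ 2 + f ^ 2 / 4) - (u - lam * f) + 1 / (2 * t)
      = r * t * (u - 1 / (2 * r * t)) ^ 2 + r * t / 4 * (f + 2 * lam / (r * t)) ^ 2 := by
    have h : lam ^ 2 = (2 * r - 1) / 4 := by rw [hr]; ring
    field_simp
    ring_nf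
    rw [h]
    ring
  have hsq0 : 0 ≤ r * t * (u ^ 2 + f ^ 2 / 4) - (u - lam * f) + 1 / (2 * t) := by
    rw [hsq]; positivity
  have hmain : 0 ≤ r * t * E - (u - lam * f) + 1 / (2 * t) := by
    have := mul_le_mul_of_nonneg_left hEge (mul_pos hr0 ht0).le
    linarith
  have hmain2 := mul_nonneg (div_nonneg hP two_pos.le) hmain
  have hd2 : P / 2 * (1 / (2 * t)) ≤ 2 / t * G.damp t θ := by
    have := mul_le_mul_of_nonneg_left hdamp (div_pos two_pos ht0).le
    calc P / 2 * (1 / (2 * t)) = 2 / t * (P / 8) := by field_simp; ring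
      _ ≤ _ := this
  have hfin : (1 - 4 * lam ^ 2) / 4 * t * P * E
      ≤ 2 / t * G.damp t θ + t * P / 2 * E - P / 2 * (u - lam * f) := by
    have : (1 - 4 * lam ^ 2) / 4 = (1 - r) / 2 := by rw [hr]; ring
    rw [this]; nlinarith
  have e : (1 - 4 * lam ^ 2) / 4 * t * P * G.dens t θ
      = ((1 - 4 * lam ^ 2) / 4 * t * P * E) / √(G.α t θ) := by
    unfold dens; rw [← hE]; ring
  rw [e]
  unfold srcE
  rw [neg_div]
  exact neg_le_neg (div_le_div_of_nonneg_right hfin hb.le)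

/-! ### Spatial oscillation of the potential -/

lemma abs_flux_le {t : ℝ} (ht : t ∈ Ioo Tm Tp) (θ : ℝ) :
    |G.flux t θ| ≤ calE lam G.α G.U G.A G.φ G.σ t θ := by
  have hα := G.sys.alpha_pos t ht θ
  have hsq : G.α t θ = √(G.α t θ) ^ 2 := (Real.sq_sqrt hα.le).symm
  unfold flux calE
  generalize √(G.α t θ) = b at *
  rw [hsq]
  have hX : 0 ≤ exp (4 * G.U t θ) / (4 * t ^ 2) := by positivity
  have hX2 : exp (4 * G.U t θ) / (2 * t ^ 2) = 2 * (exp (4 * G.U t θ) / (4 * t ^ 2)) := by ring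
  rw [hX2]
  have hY := (exp_pos (2 * lam * G.φ t θ)).le
  generalize exp (4 * G.U t θ) / (4 * t ^ 2) = X at *
  generalize exp (2 * lam * G.φ t θ) = Y at *
  have m1 := sq_nonneg (pt G.U t θ - b * pth G.U t θ)
  have m2 := mul_nonneg hX (sq_nonneg (pt G.A t θ - b * pth G.A t θ))
  have m3 := sq_nonneg (pt G.φ t θ - b * pth G.φ t θ)
  have m4 := mul_nonneg hY (sq_nonneg (pt G.σ t θ - b * pth G.σ t θ))
  have p1 := sq_nonneg (pt G.U t θ + b * pth G.U t θ)
  have p2 := mul_nonneg hX (sq_nonneg (pt G.A t θ + b * pth G.A t θ))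
  have p3 := sq_nonneg (pt G.φ t θ + b * pth G.φ t θ)
  have p4 := mul_nonneg hY (sq_nonneg (pt G.σ t θ + b * pth G.σ t θ))
  rw [abs_le]
  constructor <;> nlinarith

/-- `ln (P / Q²)`. -/
def lnpot (t θ : ℝ) : ℝ := Real.log (G.α t θ) + 2 * lam * G.φ t θ + 2 * (G.η t θ - G.U t θ)

lemma pot_eq_exp {t : ℝ} (ht : t ∈ Ioo Tm Tp) (θ : ℝ) :
    G.pot t θ = Q ^ 2 * exp (G.lnpot t θ) := by
  rw [lnpot, add_assoc, Real.exp_add, Real.exp_log (G.sys.alpha_pos t ht θ), pot]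
  ring

/-- In `∂_θ ln P` the term `α'/α` cancels against the one in the constraint for `η'`; what remains
is controlled by the energy density, see `abs_lnpot_deriv_le`. -/
lemma lnpot_hasDerivAt (hTm : 0 < Tm) {t : ℝ} (ht : t ∈ Ioo Tm Tp) (θ : ℝ) :
    HasDerivAt (fun x => G.lnpot t x)
      (2 * t * (G.flux t θ / √(G.α t θ)) + 2 * lam * pth G.φ t θ - 2 * pth G.U t θ) θ := by
  have ht0 : t ≠ 0 := (hTm.trans ht.1).ne'
  have hα := G.sys.alpha_pos t ht θ
  have hb := (Real.sqrt_pos.2 hα).ne'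
  have h := (((G.sm_α.hasDerivAt_x ht θ).log hα.ne').add
    ((G.sm_φ.hasDerivAt_x ht θ).const_mul (2 * lam))).add
    (((G.sm_η.hasDerivAt_x ht θ).sub (G.sm_U.hasDerivAt_x ht θ)).const_mul 2)
  refine HasDerivAt.congr_deriv h ?_
  have hη := G.sys.constraint_θ t ht θ
  rw [div_eq_iff ht0] at hη
  rw [hη]
  unfold flux
  field_simp
  ring

lemma abs_lnpot_deriv_le (hTm : 0 < Tm) (hlam : |lam| ≤ 1 / 2) {t c : ℝ} (ht : t ∈ Ioo Tm Tp)
    (θ : ℝ) (hc : 1 / √(G.α t θ) ≤ c) :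
    |2 * t * (G.flux t θ / √(G.α t θ)) + 2 * lam * pth G.φ t θ - 2 * pth G.U t θ|
      ≤ (2 * t + 3) * G.dens t θ + 2 * c := by
  have ht0 : 0 < t := hTm.trans ht.1
  have hα := G.sys.alpha_pos t ht θ
  have hb := Real.sqrt_pos.2 hα
  have h1 : |2 * t * (G.flux t θ / √(G.α t θ))| ≤ 2 * t * G.dens t θ := by
    rw [abs_mul, abs_div, abs_of_pos hb, abs_of_pos (by positivity : 0 < 2 * t), dens]
    gcongr
    exact G.abs_flux_le ht θ
  have hsq : G.α t θ = √(G.α t θ) ^ 2 := (Real.sq_sqrt hα.le).symm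
  have key : ∀ y : ℝ, 2 * |y| ≤ G.α t θ * y ^ 2 / √(G.α t θ) + 1 / √(G.α t θ) := by
    intro y
    rw [← add_div, le_div_iff₀ hb]
    nlinarith [sq_nonneg (√(G.α t θ) * |y| - 1), sq_abs y]
  have hpos : 0 ≤ exp (4 * G.U t θ) / (4 * t ^ 2)
      * ((pt G.A t θ) ^ 2 + G.α t θ * (pth G.A t θ) ^ 2) := by positivity
  have hpos2 : 0 ≤ exp (2 * lam * G.φ t θ)
      * ((pt G.σ t θ) ^ 2 + G.α t θ * (pth G.σ t θ) ^ 2) := by positivity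
  have hU : G.α t θ * (pth G.U t θ) ^ 2 / √(G.α t θ)
      + (G.α t θ * (pth G.φ t θ) ^ 2 / √(G.α t θ)) / 4 ≤ G.dens t θ := by
    rw [dens, div_right_comm, ← add_div]
    gcongr
    unfold calE
    nlinarith [sq_nonneg (pt G.U t θ), sq_nonneg (pt G.φ t θ)]
  have hU0 : 0 ≤ G.α t θ * (pth G.U t θ) ^ 2 / √(G.α t θ) := by positivity
  have hf0 : 0 ≤ G.α t θ * (pth G.φ t θ) ^ 2 / √(G.α t θ) := by positivity
  have h2 : |2 * lam * pth G.φ t θ| ≤ |pth G.φ t θ| := by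
    rw [abs_mul, abs_mul, abs_two]
    nlinarith [abs_nonneg (pth G.φ t θ)]
  have h3 : |2 * pth G.U t θ| = 2 * |pth G.U t θ| := by rw [abs_mul, abs_two]
  have k1 := key (pth G.φ t θ)
  have k2 := key (pth G.U t θ)
  have h4 := abs_sub (2 * t * (G.flux t θ / √(G.α t θ)) + 2 * lam * pth G.φ t θ) (2 * pth G.U t θ)
  have h5 := abs_add_le (2 * t * (G.flux t θ / √(G.α t θ))) (2 * lam * pth G.φ t θ)
  have h6 : 0 ≤ 1 / √(G.α t θ) := by positivity
  linarith

end GowdySolution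

/-- If `|f'| ≤ g`, the oscillation of `f` on `[a, b]` is at most `∫ g`. -/
lemma osc_le_integral {f f' g : ℝ → ℝ} {a b x y : ℝ} (hf : ∀ z, HasDerivAt f (f' z) z)
    (hf' : Continuous f') (hg : Continuous g) (hfg : ∀ z ∈ Icc a b, |f' z| ≤ g z)
    (hx : x ∈ Icc a b) (hy : y ∈ Icc a b) :
    f y - f x ≤ ∫ z in a..b, g z := by
  have hab : a ≤ b := hx.1.trans hx.2
  have hsub : uIoc x y ⊆ uIoc a b := by
    rw [uIoc_of_le hab]
    exact Ioc_subset_Ioc (le_min hx.1 hy.1) (max_le hx.2 hy.2)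
  have hsub' : uIoc a b ⊆ Icc a b := by rw [uIoc_of_le hab]; exact Ioc_subset_Icc_self
  rw [← intervalIntegral.integral_eq_sub_of_hasDerivAt (fun z _ => hf z)
    (hf'.intervalIntegrable x y)]
  have hg0 : 0 ≤ ∫ z in a..b, g z :=
    intervalIntegral.integral_nonneg hab fun z hz => (abs_nonneg _).trans (hfg z hz)
  calc ∫ z in x..y, f' z ≤ ‖∫ z in x..y, f' z‖ := le_abs_self _
    _ ≤ |∫ z in x..y, g z| := by
        refine intervalIntegral.norm_integral_le_abs_of_norm_le ?_ (hg.intervalIntegrable _ _)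
        exact (ae_restrict_iff' measurableSet_uIoc).2
          (Eventually.of_forall fun z hz => hfg z (hsub' (hsub hz)))
    _ ≤ |∫ z in a..b, g z| := by
        refine intervalIntegral.abs_integral_mono_interval hsub ?_ (hg.intervalIntegrable _ _)
        exact (ae_restrict_iff' measurableSet_uIoc).2
          (Eventually.of_forall fun z hz => (abs_nonneg _).trans (hfg z (hsub' hz)))
    _ = ∫ z in a..b, g z := abs_of_nonneg hg0

/-! ### Boundedness towards the past -/

namespace GowdySolution

variable {Q lam Tm Tp : ℝ} (G : GowdySolution Q lam Tm Tp)

lemma log_α_hasDerivAt {t : ℝ} (ht : t ∈ Ioo Tm Tp) (θ : ℝ) :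
    HasDerivAt (fun s => Real.log (G.α s θ)) (-(t * G.pot t θ)) t := by
  have hα := G.sys.alpha_pos t ht θ
  refine ((G.sm_α.hasDerivAt_t ht θ).log hα.ne').congr_deriv ?_
  rw [G.pt_α ht θ]
  field_simp

lemma log_α_antitone (hTm : 0 < Tm) {t t_i : ℝ} (ht : t ∈ Ioo Tm Tp) (hti : t_i ∈ Ioo Tm Tp)
    (hle : t ≤ t_i) (θ : ℝ) : Real.log (G.α t_i θ) ≤ Real.log (G.α t θ) := by
  have hanti : AntitoneOn (fun s => Real.log (G.α s θ)) (Ioo Tm Tp) := by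
    refine antitoneOn_of_deriv_nonpos (convex_Ioo _ _)
      (fun s hs => (G.log_α_hasDerivAt hs θ).continuousAt.continuousWithinAt)
      (fun s hs => (G.log_α_hasDerivAt (interior_subset hs) θ).differentiableAt.differentiableWithinAt)
      fun s hs => ?_
    have hs := interior_subset hs
    rw [(G.log_α_hasDerivAt hs θ).deriv]
    have := mul_nonneg (hTm.trans hs.1).le (G.pot_nonneg hs θ)
    linarith
  exact hanti ht hti hle

/-- Harnack-type bound: towards the past, `P(t, ·)` has ratio of maximum to minimum bounded
uniformly in `t`. -/
lemma exists_pot_harnack (hTm : 0 < Tm) (hlam : |lam| ≤ 1 / 2) {t_i : ℝ} (hti : t_i ∈ Ioo Tm Tp)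
    {K : ℝ} (hK : ∀ t ∈ Ioc Tm t_i, ∫ x in (0 : ℝ)..2 * π, G.dens t x ≤ K) :
    ∃ M : ℝ, 0 < M ∧ ∀ t ∈ Ioc Tm t_i, ∀ x ∈ Icc 0 (2 * π), ∀ y ∈ Icc 0 (2 * π),
      G.pot t y ≤ M * G.pot t x := by
  have hb : ∀ x, 0 < √(G.α t_i x) := fun x => Real.sqrt_pos.2 (G.sys.alpha_pos t_i hti x)
  have hcont : Continuous (fun x => 1 / √(G.α t_i x)) :=
    continuous_const.div (G.sm_sqrt.continuous_x hti) fun x => (hb x).ne'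
  obtain ⟨c, hc⟩ := (isCompact_Icc (a := (0 : ℝ)) (b := 2 * π)).exists_bound_of_continuousOn
    hcont.continuousOn
  refine ⟨exp ((2 * t_i + 3) * K + 2 * π * (2 * c)), exp_pos _, fun t ht x hx y hy => ?_⟩
  have ht' : t ∈ Ioo Tm Tp := ⟨ht.1, ht.2.trans_lt hti.2⟩
  have ht0 : 0 < t := hTm.trans ht.1
  have hcα : ∀ z ∈ Icc 0 (2 * π), 1 / √(G.α t z) ≤ c := by
    intro z hz
    refine le_trans ?_ ((le_abs_self _).trans (hc z hz))
    have h := G.log_α_antitone hTm ht' hti ht.2 z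
    rw [Real.log_le_log_iff (G.sys.alpha_pos _ hti z) (G.sys.alpha_pos _ ht' z)] at h
    exact one_div_le_one_div_of_le (hb z) (Real.sqrt_le_sqrt h)
  have hcd := (G.sm_dens hTm).continuous_x ht'
  have hosc := osc_le_integral (f := fun z => G.lnpot t z) (a := 0) (b := 2 * π)
    (g := fun z => (2 * t + 3) * G.dens t z + 2 * c)
    (fun z => G.lnpot_hasDerivAt hTm ht' z)
    (by
      have h1 := ((G.sm_flux hTm).continuous_x ht').div (G.sm_sqrt.continuous_x ht')
        fun z => (Real.sqrt_pos.2 (G.sys.alpha_pos t ht' z)).ne'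
      have h2 := G.sm_φ.pth.continuous_x ht'
      have h3 := G.sm_U.pth.continuous_x ht'
      exact ((h1.const_mul _).add (h2.const_mul _)).sub (h3.const_mul _))
    ((hcd.const_mul _).add continuous_const)
    (fun z hz => G.abs_lnpot_deriv_le hTm hlam ht' z (hcα z hz)) hx hy
  rw [intervalIntegral.integral_add ((hcd.const_mul _).intervalIntegrable _ _)
    intervalIntegrable_const, intervalIntegral.integral_const_mul,
    intervalIntegral.integral_const, smul_eq_mul, sub_zero] at hosc
  have hD0 : 0 ≤ ∫ z in (0 : ℝ)..2 * π, G.dens t z :=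
    intervalIntegral.integral_nonneg (by positivity) fun z _ => G.dens_nonneg ht' z
  have hDK := hK t ht
  have h1 : (2 * t + 3) * (∫ z in (0 : ℝ)..2 * π, G.dens t z) ≤ (2 * t_i + 3) * K := by
    have h := ht.2
    have h0 : 0 ≤ 2 * t_i + 3 := by linarith
    gcongr
  rw [G.pot_eq_exp ht', G.pot_eq_exp ht', mul_left_comm, ← Real.exp_add]
  gcongr
  linarith

lemma dens_pos (hQ : Q ≠ 0) (htcc : TCC Q lam Tm Tp G.η G.α G.U G.φ G.σ) {t : ℝ}
    (ht : t ∈ Ioo Tm Tp) (θ : ℝ) : 0 < G.dens t θ := by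
  have hα := G.sys.alpha_pos t ht θ
  have hP : 0 < G.pot t θ := by unfold pot; positivity
  have hK := G.tcc_pot htcc ht θ
  have h1 : 0 ≤ (pt G.U t θ) ^ 2
      + exp (4 * G.U t θ) / (4 * t ^ 2) * (G.α t θ * (pth G.A t θ) ^ 2) := by positivity
  have h2 := G.damp_le_calE ht θ
  refine div_pos (lt_of_lt_of_le ?_ h2) (Real.sqrt_pos.2 hα)
  unfold damp
  linarith

lemma energyEt_pos (hTm : 0 < Tm) (hQ : Q ≠ 0) (htcc : TCC Q lam Tm Tp G.η G.α G.U G.φ G.σ)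
    {t : ℝ} (ht : t ∈ Ioo Tm Tp) : 0 < ∫ x in (0 : ℝ)..2 * π, G.dens t x :=
  intervalIntegral.intervalIntegral_pos_of_pos ((G.sm_dens hTm).intervalIntegrable ht _ _)
    (G.dens_pos hQ htcc ht) Real.two_pi_pos

/-- Towards the past `Ẽ` grows at least like a fixed power of `α(·, θ)`: by `srcE_le` and the
Harnack bound, `∂ₜ ln Ẽ ≤ -k t P(t, θ) = k ∂ₜ ln α(t, θ)`. -/
lemma log_α_le_log_energy (hTm : 0 < Tm) (hQ : Q ≠ 0)
    (htcc : TCC Q lam Tm Tp G.η G.α G.U G.φ G.σ) (hlam : 0 < 1 - 4 * lam ^ 2)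
    {t_i : ℝ} (hti : t_i ∈ Ioo Tm Tp) {M : ℝ} (hM0 : 0 < M)
    (hM : ∀ t ∈ Ioc Tm t_i, ∀ x ∈ Icc 0 (2 * π), ∀ y ∈ Icc 0 (2 * π),
      G.pot t y ≤ M * G.pot t x)
    {t : ℝ} (ht : t ∈ Ioc Tm t_i) {θ : ℝ} (hθ : θ ∈ Icc 0 (2 * π)) :
    (1 - 4 * lam ^ 2) / (4 * M) * (Real.log (G.α t θ) - Real.log (G.α t_i θ))
      ≤ Real.log (∫ x in (0 : ℝ)..2 * π, G.dens t x)
        - Real.log (∫ x in (0 : ℝ)..2 * π, G.dens t_i x) := by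
  set k := (1 - 4 * lam ^ 2) / (4 * M) with hk
  have hsub : Ioc Tm t_i ⊆ Ioo Tm Tp := fun s hs => ⟨hs.1, hs.2.trans_lt hti.2⟩
  have hder : ∀ s ∈ Ioc Tm t_i,
      HasDerivAt (fun s => Real.log (∫ x in (0 : ℝ)..2 * π, G.dens s x)
        - k * Real.log (G.α s θ))
      ((∫ x in (0 : ℝ)..2 * π, G.srcE s x) / (∫ x in (0 : ℝ)..2 * π, G.dens s x)
        - k * (-(s * G.pot s θ))) s := by
    intro s hs
    have hs' := hsub hs
    exact (((G.sm_dens hTm).hasDerivAt_balance (G.sm_flux hTm) G.flux_periodic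
      (G.dens_balance hTm) hs').log (G.energyEt_pos hTm hQ htcc hs').ne').sub
      ((G.log_α_hasDerivAt hs' θ).const_mul k)
  have hanti : AntitoneOn (fun s => Real.log (∫ x in (0 : ℝ)..2 * π, G.dens s x)
      - k * Real.log (G.α s θ)) (Ioc Tm t_i) := by
    refine antitoneOn_of_deriv_nonpos (convex_Ioc _ _)
      (fun s hs => (hder s hs).continuousAt.continuousWithinAt)
      (fun s hs => (hder s (interior_subset hs)).differentiableAt.differentiableWithinAt)
      fun s hs => ?_
    have hs := interior_subset hs
    have hs' := hsub hs
    have hs0 : 0 < s := hTm.trans hs.1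
    have hE := G.energyEt_pos hTm hQ htcc hs'
    rw [(hder s hs).deriv]
    have hint : ∫ x in (0 : ℝ)..2 * π, G.srcE s x
        ≤ ∫ x in (0 : ℝ)..2 * π, -(k * s * G.pot s θ) * G.dens s x := by
      refine intervalIntegral.integral_mono_on (by positivity)
        ((G.srcE_continuous hTm hs').intervalIntegrable _ _)
        ((((G.sm_dens hTm).continuous_x hs').const_mul _).intervalIntegrable _ _) fun x hx => ?_
      refine (G.srcE_le hTm htcc hs' x).trans ?_
      rw [neg_mul]
      refine neg_le_neg (mul_le_mul_of_nonneg_right ?_ (G.dens_nonneg hs' x))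
      calc k * s * G.pot s θ ≤ k * s * (M * G.pot s x) := by
            have hk0 : 0 ≤ k := by rw [hk]; positivity
            have := hM s hs x hx θ hθ
            gcongr
        _ = (1 - 4 * lam ^ 2) / 4 * s * G.pot s x := by rw [hk]; field_simp
    rw [intervalIntegral.integral_const_mul] at hint
    rw [← div_le_iff₀ hE] at hint
    linarith
  have := hanti ht ⟨hti.1, le_rfl⟩ ht.2
  simp only at this
  linarith

/-- Bounds for `P` and `ln α` on one period, towards the past of `t_i`. -/
lemma exists_bounds (hTm : 0 < Tm) (hQ : Q ≠ 0)
    (htcc : TCC Q lam Tm Tp G.η G.α G.U G.φ G.σ) (hlam : |lam| < 1 / 2)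
    {t_i : ℝ} (hti : t_i ∈ Ioo Tm Tp) :
    ∃ B L : ℝ, ∀ t ∈ Ioc Tm t_i, ∀ θ ∈ Icc 0 (2 * π),
      G.pot t θ ≤ B ∧ |Real.log (G.α t θ)| ≤ L := by
  have hlam2 : 0 < 1 - 4 * lam ^ 2 := by
    have := sq_lt_sq' (abs_lt.1 hlam).1 (abs_lt.1 hlam).2
    linarith
  have hsub : Ioc Tm t_i ⊆ Ioo Tm Tp := fun s hs => ⟨hs.1, hs.2.trans_lt hti.2⟩
  -- bound for the energy `E`, hence for `Ẽ`
  obtain ⟨K, hK⟩ : ∃ K, ∀ t ∈ Ioc Tm t_i, ∫ x in (0 : ℝ)..2 * π, G.densP t x ≤ K := by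
    refine ⟨(t_i ^ 2 * ∫ x in (0 : ℝ)..2 * π, G.densP t_i x) / Tm ^ 2, fun t ht => ?_⟩
    rw [le_div_iff₀ (by positivity), mul_comm]
    refine le_trans ?_ (G.energy_bound hTm (hsub ht) hti ht.2)
    have h0 : 0 ≤ ∫ x in (0 : ℝ)..2 * π, G.densP t x :=
      intervalIntegral.integral_nonneg (by positivity) fun x _ =>
        (G.dens_nonneg (hsub ht) x).trans (G.dens_le_densP (hsub ht) x)
    have := ht.1.le
    gcongr
  have hKt : ∀ t ∈ Ioc Tm t_i, ∫ x in (0 : ℝ)..2 * π, G.dens t x ≤ K := fun t ht =>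
    (intervalIntegral.integral_mono_on (by positivity)
      ((G.sm_dens hTm).intervalIntegrable (hsub ht) _ _)
      ((G.sm_densP hTm).intervalIntegrable (hsub ht) _ _)
      fun x _ => G.dens_le_densP (hsub ht) x).trans (hK t ht)
  obtain ⟨M, hM0, hM⟩ := G.exists_pot_harnack hTm hlam.le hti hKt
  -- bound for `ln α` at the initial time
  have hlogc : Continuous (fun x => Real.log (G.α t_i x)) :=
    (G.sm_α.continuous_x hti).log fun x => (G.sys.alpha_pos t_i hti x).ne'
  obtain ⟨c, hc⟩ := (isCompact_Icc (a := (0 : ℝ)) (b := 2 * π)).exists_bound_of_continuousOn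
    hlogc.continuousOn
  set D := (Real.log K - Real.log (∫ x in (0 : ℝ)..2 * π, G.dens t_i x))
    / ((1 - 4 * lam ^ 2) / (4 * M)) with hD
  have hk0 : 0 < (1 - 4 * lam ^ 2) / (4 * M) := by positivity
  have hup : ∀ t ∈ Ioc Tm t_i, ∀ θ ∈ Icc 0 (2 * π), Real.log (G.α t θ) ≤ c + D := by
    intro t ht θ hθ
    have h1 := G.log_α_le_log_energy hTm hQ htcc hlam2 hti hM0 hM ht hθ
    have h2 := Real.log_le_log (G.energyEt_pos hTm hQ htcc (hsub ht)) (hKt t ht)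
    have h3 : Real.log (G.α t θ) - Real.log (G.α t_i θ) ≤ D := by
      rw [hD, le_div_iff₀ hk0, mul_comm]
      linarith
    have h4 := (abs_le.1 (hc θ hθ)).2
    linarith
  refine ⟨4 * √(exp (c + D)) * M * K / (2 * π), max (c + D) c, fun t ht θ hθ => ⟨?_, ?_⟩⟩
  · have ht' := hsub ht
    have hb0 : 0 < √(exp (c + D)) := Real.sqrt_pos.2 (exp_pos _)
    -- `∫ P / (4√α) ≤ E ≤ K`, with `α` bounded above and `P` comparable to its value at `θ`
    have hlow : ∫ x in (0 : ℝ)..2 * π, G.pot t θ / (4 * √(exp (c + D)) * M)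
        ≤ ∫ x in (0 : ℝ)..2 * π, G.densP t x := by
      refine intervalIntegral.integral_mono_on (by positivity) intervalIntegrable_const
        ((G.sm_densP hTm).intervalIntegrable ht' _ _) fun x hx => ?_
      have hα := G.sys.alpha_pos t ht' x
      have hb := Real.sqrt_pos.2 hα
      have hαle : √(G.α t x) ≤ √(exp (c + D)) :=
        Real.sqrt_le_sqrt ((Real.log_le_iff_le_exp hα).1 (hup t ht x hx))
      have hP0 := G.pot_nonneg ht' x
      have h1 : G.pot t θ / (4 * √(exp (c + D)) * M) ≤ G.pot t x / (4 * √(exp (c + D))) := by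
        rw [div_le_div_iff₀ (by positivity) (by positivity)]
        have := mul_le_mul_of_nonneg_right (hM t ht x hx θ hθ)
          (by positivity : 0 ≤ 4 * √(exp (c + D)))
        linarith
      have h2 : G.pot t x / (4 * √(exp (c + D))) ≤ G.pot t x / (4 * √(G.α t x)) := by gcongr
      have h3 := G.dens_nonneg ht' x
      unfold densP
      linarith
    rw [intervalIntegral.integral_const, smul_eq_mul, sub_zero] at hlow
    have h := hlow.trans (hK t ht)
    rw [← mul_div_assoc, div_le_iff₀ (by positivity)] at h
    rw [le_div_iff₀ (by positivity)]
    linarith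
  · have h1 := hup t ht θ hθ
    have h2 := G.log_α_antitone hTm (hsub ht) hti ht.2 θ
    have h3 := (abs_le.1 (hc θ hθ)).1
    rw [abs_le]
    constructor
    · have := le_max_right (c + D) c
      linarith
    · exact h1.trans (le_max_left _ _)

end GowdySolution

theorem alpha_log_deriv_bounded_past (Q lam Tm Tp t_i : ℝ) (hQ : Q ≠ 0) (hTm : 0 < Tm) (hti : Tm < t_i)
    (hTp : t_i < Tp) (G : GowdySolution Q lam Tm Tp)
    (lamBar : ℝ) (hlam : |lam| ≤ lamBar) (hlamBar : lamBar < 1 / 2)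
    (htcc : TCC Q lam Tm Tp G.η G.α G.U G.φ G.σ) :
    ∃ C : ℝ, ∀ t ∈ Ioc Tm t_i, ∀ θ : ℝ,
      |pt G.α t θ / G.α t θ| ≤ C ∧ |Real.log (G.α t θ)| ≤ C ∧ |pt G.α t θ| ≤ C := by
  have hti' : t_i ∈ Ioo Tm Tp := ⟨hti, hTp⟩
  obtain ⟨B, L, hBL⟩ := G.exists_bounds hTm hQ htcc (hlam.trans_lt hlamBar) hti'
  refine ⟨max (t_i * B) (max L (t_i * B * exp L)), fun t ht θ => ?_⟩
  have ht' : t ∈ Ioo Tm Tp := ⟨ht.1, ht.2.trans_lt hTp⟩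
  have ht0 : 0 < t := hTm.trans ht.1
  -- reduction to one period
  obtain ⟨y, hy, hPy⟩ := Function.Periodic.exists_mem_Ico₀
    (f := fun x => (G.pot t x, G.α t x))
    (fun x => Prod.ext (G.pot_periodic t x) (G.periodic G.α (by simp) t x)) Real.two_pi_pos θ
  obtain ⟨hP, hα⟩ := Prod.mk.inj hPy
  obtain ⟨h1, h2⟩ := hBL t ht y ⟨hy.1, hy.2.le⟩
  rw [← hP] at h1
  rw [← hα] at h2
  have hα0 := G.sys.alpha_pos t ht' θ
  have hP0 := G.pot_nonneg ht' θ
  have h3 : t * G.pot t θ ≤ t_i * B := mul_le_mul ht.2 h1 hP0 (ht0.le.trans ht.2)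
  have h4 : G.α t θ ≤ exp L := (Real.log_le_iff_le_exp hα0).1 ((le_abs_self _).trans h2)
  have h5 : t * G.pot t θ * G.α t θ ≤ t_i * B * exp L :=
    mul_le_mul h3 h4 hα0.le ((mul_nonneg ht0.le hP0).trans h3)
  have e1 : |pt G.α t θ / G.α t θ| = t * G.pot t θ := by
    rw [G.pt_α ht' θ, neg_div, mul_div_assoc, div_self hα0.ne', mul_one, abs_neg,
      abs_of_nonneg (by positivity)]
  have e2 : |pt G.α t θ| = t * G.pot t θ * G.α t θ := by
    rw [G.pt_α ht' θ, abs_neg, abs_of_nonneg (by positivity)]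
  rw [e1, e2]
  exact ⟨h3.trans (le_max_left _ _), h2.trans ((le_max_left _ _).trans (le_max_right _ _)),
    h5.trans ((le_max_right _ _).trans (le_max_right _ _))⟩

end
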